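/- Let m, n ≥ 1, let p_-, q_-, p_+, q_+ ∈ ℝ with -1 < p_± ≤ q_± < 1, and set a_± = p_± q_±, b_± = p_± + q_±. Let Λ^{(m,n)} := {λ ∈ ℤⁿ : m ≥ λ_1 ≥ ⋯ ≥ λ_n ≥ 0}; for 0 ≤ i ≤ m+n-1 let ξ_i^{(m+n-1)} be the unique real solution of 2(m+n-1)ξ + v_{p_-}(ξ)+v_{q_-}(ξ)+v_{p_+}(ξ)+v_{q_+}(ξ) = 2π(i+1); for λ̂ ∈ Λ^{(m,n)} put ξ_λ̂^{(m,n)} := (ξ^{(m+n-1)}_{λ̂_1+n-1}, ξ^{(m+n-1)}_{λ̂_2+n-2}, …, ξ^{(m+n-1)}_{λ̂_n}). With p_l(ξ) := U_l(cos ξ) - b_- U_{l-1}(cos ξ) + a_- U_{l-2}(cos ξ), V(ξ) := ∏_{j<k} 2(cos ξ_j - cos ξ_k), P_λ(ξ) := det[p_{n-j+λ_j}(ξ_k)]_{1≤j,k≤n}/V(ξ), weights Δ_λ^{(m,n)} := (1-a_- δ_{λ_n,0})^{-1}(1-a_+ δ_{λ_1,m})^{-1}, C(ξ) := ∏_j (1-p_-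 e^{-iξ_j})(1-q_- e^{-iξ_j})/(1-e^{-2iξ_j}) · ∏_{j<k}(1-e^{-i(ξ_j+ξ_k)})^{-1}(1-e^{-i(ξ_j-ξ_k)})^{-1}, H^{(m,n)}(ξ) := ∏_j ( 2(m+n-1) + ∑_{q∈{p_-,q_-,p_+,q_+}} (1-q²)/(1-2q cos ξ_j + q²) ), and Δ̂_λ̂^{(m,n)} := 1/( C(ξ_λ̂^{(m,n)}) C(-ξ_λ̂^{(m,n)}) H^{(m,n)}(ξ_λ̂^{(m,n)}) ): for all λ̂, μ̂ ∈ Λ^{(m,n)} one has ∑_{λ ∈ Λ^{(m,n)}} P_λ(ξ_λ̂^{(m,n)}) P_λ(ξ_μ̂^{(m,n)}) Δ_λ^{(m,n)} = 0 if μ̂ ≠ λ̂, and = 1/Δ̂_λ̂^{(m,n)} if μ̂ = λ̂. -/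

import Mathlib

/-!
By Cauchy–Binet the identity reduces to one variable. A partition `λ` in the `m × n` box is the
same as a strictly decreasing sequence `λ_j + n - j` in `{0, …, M}` with `M = m + n - 1`
(`strictSeq`), and `Δ_λ` is the product over this sequence of the one-variable weights `wt`
(`prod_wt`). Hence the sum over `λ` is, up to Vandermonde factors, the determinant of the Gram matrix
with entries `∑_{l ≤ M} p_l(ξ_j) p_l(η_k) wt(l)`, where `ξ_j`, `η_k` run through the spectral points
attached to the strict sequences of the two dual partitions.

In one variable, `p_l = c(ξ) e^{ilξ} + c(-ξ) e^{-ilξ}` (`bs_eq`) satisfies the recurrence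
`p_{l+1} + p_{l-1} = 2 cos ξ p_l` with the boundary values `p_0 = 1 - a₋`, `p_1 = 2 cos ξ - b₋`.
Since `e^{i v_q(ξ)} = (e^{iξ} - q) / (1 - q e^{iξ})` (`exp_v`), the equation for the spectral points
exponentiates to a Bethe equation (`bethe`), which is exactly the boundary condition
`(1 - a₊) p_{M-1} = (2 cos ξ - b₊) p_M` at the upper end (`bs_boundary`). The Christoffel–Darboux
formula then shows that distinct spectral points give orthogonal vectors (`orth_ne`). On the diagonal
the squares are summed as geometric series, and the Bethe equation brings the result to
`c(ξ) c(-ξ) H(ξ)` (`sum_sq`, `boundary_identity`, `orth_self`).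

Consequently the Gram matrix is diagonal when the two dual partitions agree, and has a zero row when
they differ. The Vandermonde factors are accounted for by
`C(ξ) C(-ξ) = V(ξ)⁻² ∏_j c(ξ_j) c(-ξ_j)` (`CC_mul_CC_neg`).
-/

/-- The function `v_q(ξ) = ∫_0^ξ (1-q²)/(1-2q cos x + q²) dx`. -/
noncomputable def v (q ξ : ℝ) : ℝ :=
  ∫ x in (0:ℝ)..ξ, (1 - q^2) / (1 - 2*q*Real.cos x + q^2)

/-- The Bernstein–Szegő polynomial `p_l(ξ) = U_l(cos ξ) - b₋ U_{l-1}(cos ξ) + a₋ U_{l-2}(cos ξ)`,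
with the Chebyshev polynomials of the second kind indexed by `ℤ`. -/
noncomputable def bs (am bm : ℝ) (l : ℤ) (ξ : ℝ) : ℝ :=
  (Polynomial.Chebyshev.U ℝ l).eval (Real.cos ξ)
    - bm * (Polynomial.Chebyshev.U ℝ (l - 1)).eval (Real.cos ξ)
    + am * (Polynomial.Chebyshev.U ℝ (l - 2)).eval (Real.cos ξ)

/-- The complex amplitude `c(ξ) = (1-p₋e^{-iξ})(1-q₋e^{-iξ})/(1-e^{-2iξ})`. -/
noncomputable def cAmp (pm qm : ℝ) (ξ : ℝ) : ℂ :=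
  (1 - (pm : ℂ) * Complex.exp (-Complex.I * ξ)) * (1 - (qm : ℂ) * Complex.exp (-Complex.I * ξ)) /
    (1 - Complex.exp (-2 * Complex.I * ξ))

/-- The multivariate amplitude `C(ξ)`. -/
noncomputable def CC (pm qm : ℝ) {n : ℕ} (ξ : Fin n → ℝ) : ℂ :=
  (∏ j, cAmp pm qm (ξ j)) *
    ∏ j, ∏ k ∈ Finset.Ioi j,
      ((1 - Complex.exp (-Complex.I * ((ξ j + ξ k : ℝ) : ℂ)))⁻¹ *
        (1 - Complex.exp (-Complex.I * ((ξ j - ξ k : ℝ) : ℂ)))⁻¹)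

/-- The Vandermonde-type determinant `V(ξ) = ∏_{j<k} 2(cos ξ_j - cos ξ_k)`. -/
noncomputable def VV {n : ℕ} (ξ : Fin n → ℝ) : ℝ :=
  ∏ j, ∏ k ∈ Finset.Ioi j, 2 * (Real.cos (ξ j) - Real.cos (ξ k))

/-- `H^{(m)}(ξ) = 2m + Σ_{q ∈ {p₋,q₋,p₊,q₊}} (1-q²)/(1-2q cos ξ + q²)`. -/
noncomputable def Hw (m : ℕ) (pm qm pp qp : ℝ) (ξ : ℝ) : ℝ :=
  2*(m:ℝ) + (1 - pm^2) / (1 - 2*pm*Real.cos ξ + pm^2)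
    + (1 - qm^2) / (1 - 2*qm*Real.cos ξ + qm^2)
    + (1 - pp^2) / (1 - 2*pp*Real.cos ξ + pp^2)
    + (1 - qp^2) / (1 - 2*qp*Real.cos ξ + qp^2)

/-- The cone `Λ^{(m,n)}` of partitions `m ≥ λ₁ ≥ ⋯ ≥ λ_n ≥ 0` (encoded with 0-based indices). -/
abbrev Lam (m n : ℕ) : Type :=
  {lam : Fin n → Fin (m+1) // ∀ j k : Fin n, j ≤ k → lam k ≤ lam j}

/-- The spectral vector `ξ_λ̂^{(m,n)} = (ξ_{λ̂_j + n - j})_{j=1}^n` (0-based: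
`j ↦ ξhat (λ̂_j + (n-1-j))`). -/
noncomputable def xiVec (m n : ℕ) (ξhat : ℕ → ℝ) (lamh : Lam m n) : Fin n → ℝ :=
  fun j => ξhat ((lamh.1 j : ℕ) + (n - 1 - (j : ℕ)))

/-- The generalized Schur polynomial
`P_λ(ξ) = det[p_{n-j+λ_j}(ξ_k)] / V(ξ)` (0-based row index). -/
noncomputable def Pgen (am bm : ℝ) (m n : ℕ) (lam : Lam m n) (ξ : Fin n → ℝ) : ℝ :=
  Matrix.det
    (Matrix.of fun j k : Fin n =>
      bs am bm ((n : ℤ) - 1 - (j : ℕ) + ((lam.1 j : ℕ) : ℤ)) (ξ k)) / VV ξ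

/-- The weights `Δ_λ^{(m,n)} = (1 - a₋δ_{λ_n,0})⁻¹ (1 - a₊δ_{λ_1,m})⁻¹`. -/
noncomputable def ΔLam (m n : ℕ) (hn : 1 ≤ n) (am ap : ℝ) (lam : Lam m n) : ℝ :=
  (1 - am * (if (lam.1 ⟨n-1, by omega⟩ : ℕ) = 0 then 1 else 0))⁻¹ *
    (1 - ap * (if (lam.1 ⟨0, by omega⟩ : ℕ) = m then 1 else 0))⁻¹

/-- `H^{(m,n)}(ξ) = ∏_j H^{(m+n-1)}(ξ_j)`. -/
noncomputable def Hmn (mtot : ℕ) (pm qm pp qp : ℝ) {n : ℕ} (ξ : Fin n → ℝ) : ℝ :=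
  ∏ j, Hw mtot pm qm pp qp (ξ j)

/-- The Plancherel weights `Δ̂_λ̂^{(m,n)} = 1/(C(ξ_λ̂)C(-ξ_λ̂)H^{(m,n)}(ξ_λ̂))`. -/
noncomputable def ΔhatLam (m n : ℕ) (pm qm pp qp : ℝ) (ξhat : ℕ → ℝ) (lamh : Lam m n) : ℂ :=
  (CC pm qm (xiVec m n ξhat lamh) *
    CC pm qm (fun j => -(xiVec m n ξhat lamh j)) *
      ((Hmn (m+n-1) pm qm pp qp (xiVec m n ξhat lamh) : ℝ) : ℂ))⁻¹

/-! ### The phase function -/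

theorem den_pos {q : ℝ} (h : -1 < q) (h' : q < 1) (x : ℝ) : 0 < 1 - 2*q*Real.cos x + q^2 := by
  nlinarith [Real.sin_sq_add_cos_sq x, sq_nonneg (q - Real.cos x), Real.neg_one_le_cos x,
    Real.cos_le_one x, mul_pos (sub_pos.2 h') (sub_pos.2 h)]

theorem one_sub_mul_cos_pos {q : ℝ} (h : -1 < q) (h' : q < 1) (x : ℝ) :
    0 < 1 - q * Real.cos x := by
  have h1 := Real.abs_cos_le_one x
  have h2 : |q * Real.cos x| < 1 := by
    rw [abs_mul]
    exact (mul_le_of_le_one_right (abs_nonneg q) h1).trans_lt (abs_lt.2 ⟨h, h'⟩)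
  linarith [(abs_lt.1 h2).2]

/-- Closed form of `v`, valid on the whole line because `1 - q cos ξ > 0` keeps the argument of
`arctan` away from a pole. -/
theorem v_eq {q : ℝ} (h : -1 < q) (h' : q < 1) (ξ : ℝ) :
    v q ξ = ξ + 2 * Real.arctan (q * Real.sin ξ / (1 - q * Real.cos ξ)) := by
  have key : ∀ x : ℝ, HasDerivAt
      (fun x => x + 2 * Real.arctan (q * Real.sin x / (1 - q * Real.cos x)))
      ((1 - q^2) / (1 - 2*q*Real.cos x + q^2)) x := by
    intro x
    have hd := den_pos h h' x
    have hc := one_sub_mul_cos_pos h h' x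
    have hq : HasDerivAt (fun x => q * Real.sin x / (1 - q * Real.cos x))
        ((q * Real.cos x * (1 - q * Real.cos x) - q * Real.sin x * (q * Real.sin x))
          / (1 - q * Real.cos x)^2) x := by
      have h1 : HasDerivAt (fun x => 1 - q * Real.cos x) (q * Real.sin x) x := by
        simpa using ((Real.hasDerivAt_cos x).const_mul q).const_sub 1
      exact ((Real.hasDerivAt_sin x).const_mul q).div h1 hc.ne'
    refine ((hasDerivAt_id x).add (hq.arctan.const_mul 2)).congr_deriv ?_
    have hs := Real.sin_sq_add_cos_sq x
    have e1 : 1 + (q * Real.sin x / (1 - q * Real.cos x))^2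
        = (1 - 2*q*Real.cos x + q^2) / (1 - q * Real.cos x)^2 := by
      field_simp
      linear_combination q^2 * hs
    rw [e1]
    field_simp
    linear_combination (-2) * q^2 * hs
  unfold v
  rw [intervalIntegral.integral_eq_sub_of_hasDerivAt (fun x _ => key x)]
  · simp
  · apply Continuous.intervalIntegrable
    exact continuous_const.div (by fun_prop) (fun x => (den_pos h h' x).ne')

theorem v_strictMono {q : ℝ} (h : -1 < q) (h' : q < 1) : StrictMono (v q) := by
  intro a b hab
  have hint : ∀ a b : ℝ, IntervalIntegrable
      (fun x => (1 - q^2) / (1 - 2*q*Real.cos x + q^2)) MeasureTheory.volume a b := fun a b => by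
    apply Continuous.intervalIntegrable
    exact continuous_const.div (by fun_prop) (fun x => (den_pos h h' x).ne')
  have hp : 0 < ∫ x in a..b, (1 - q^2) / (1 - 2*q*Real.cos x + q^2) :=
    intervalIntegral.intervalIntegral_pos_of_pos (hint a b)
      (fun x => div_pos (by nlinarith) (den_pos h h' x)) hab
  have := intervalIntegral.integral_add_adjacent_intervals (hint 0 a) (hint a b)
  unfold v
  linarith

theorem v_zero (q : ℝ) : v q 0 = 0 := by simp [v]

theorem v_pi {q : ℝ} (h : -1 < q) (h' : q < 1) : v q Real.pi = Real.pi := by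
  simp [v_eq h h']

/-- The phase identity `e^{i v_q(ξ)} = (e^{iξ} - q) / (1 - q e^{iξ})`. -/
theorem exp_v {q : ℝ} (h : -1 < q) (h' : q < 1) (ξ : ℝ) :
    Complex.exp (Complex.I * v q ξ) * (1 - q * Complex.exp (Complex.I * ξ))
      = Complex.exp (Complex.I * ξ) - q := by
  have hc := one_sub_mul_cos_pos h h' ξ
  rw [v_eq h h']
  set t := q * Real.sin ξ / (1 - q * Real.cos ξ) with ht
  have ht' : t * (1 - q * Real.cos ξ) = q * Real.sin ξ := by rw [ht]; field_simp
  have hz : Complex.exp (Complex.I * ξ) = Real.cos ξ + Real.sin ξ * Complex.I := by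
    rw [mul_comm, Complex.exp_mul_I]; simp
  have hA : Complex.exp (Complex.I * Real.arctan t)
      = (1 + t * Complex.I) / (Real.sqrt (1 + t^2) : ℝ) := by
    rw [mul_comm, Complex.exp_mul_I, ← Complex.ofReal_cos, ← Complex.ofReal_sin,
      Real.cos_arctan, Real.sin_arctan]
    push_cast
    ring
  have hs : ((Real.sqrt (1 + t^2) : ℝ) : ℂ)^2 = 1 + (t:ℂ)^2 := by
    rw [← Complex.ofReal_pow, Real.sq_sqrt (by positivity)]; push_cast; rfl
  have hs0 : (1 + (t:ℂ)^2) ≠ 0 := by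
    have : (1 + t^2 : ℝ) ≠ 0 := by positivity
    exact_mod_cast this
  have e : Complex.exp (Complex.I * ((ξ + 2 * Real.arctan t : ℝ) : ℂ))
      = Complex.exp (Complex.I * ξ) * Complex.exp (Complex.I * Real.arctan t)^2 := by
    rw [← Complex.exp_nat_mul, ← Complex.exp_add]
    congr 1
    push_cast
    ring
  rw [e, hA, div_pow, hs, hz]
  have hcs : (Real.cos ξ : ℂ)^2 + (Real.sin ξ : ℂ)^2 = 1 := by
    exact_mod_cast Real.cos_sq_add_sin_sq ξ
  have ht'' : (t:ℂ) * (1 - q * Real.cos ξ) = q * Real.sin ξ := by exact_mod_cast ht'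
  have hfac : (1 + t * Complex.I)^2 * (1 - q * (Real.cos ξ + Real.sin ξ * Complex.I))
      = (1 + (t:ℂ)^2) * (1 - q * (Real.cos ξ - Real.sin ξ * Complex.I)) := by
    have a1 : (1 - t * Complex.I) * (1 + t * Complex.I) = 1 + (t:ℂ)^2 := by
      linear_combination (-(t:ℂ)^2) * Complex.I_sq
    rw [← a1]
    have : (1 + t * Complex.I) * (1 - q * (Real.cos ξ + Real.sin ξ * Complex.I))
        = (1 - t * Complex.I) * (1 - q * (Real.cos ξ - Real.sin ξ * Complex.I)) := by
      linear_combination 2 * Complex.I * ht''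
    linear_combination (1 + t * Complex.I) * this
  rw [mul_assoc, div_mul_eq_mul_div, hfac, mul_div_cancel_left₀ _ hs0]
  linear_combination (-q : ℂ) * hcs + (q : ℂ) * (Real.sin ξ : ℂ)^2 * Complex.I_sq

theorem exp_I_norm (ξ : ℝ) : ‖Complex.exp (Complex.I * ξ)‖ = 1 := by
  rw [mul_comm]; exact Complex.norm_exp_ofReal_mul_I ξ

theorem one_sub_mul_ne {q : ℝ} (h : -1 < q) (h' : q < 1) {z : ℂ} (hz : ‖z‖ = 1) :
    1 - (q:ℂ) * z ≠ 0 := by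
  intro h0
  have h1 : (q:ℂ) * z = 1 := by linear_combination -h0
  have h2 : ‖(q:ℂ) * z‖ = 1 := by rw [h1]; simp
  rw [norm_mul, hz, mul_one, Complex.norm_real, Real.norm_eq_abs] at h2
  exact absurd h2 (abs_lt.2 ⟨h, h'⟩).ne

theorem sub_ne {q : ℝ} (h : -1 < q) (h' : q < 1) {z : ℂ} (hz : ‖z‖ = 1) :
    z - (q:ℂ) ≠ 0 := by
  intro h0
  have h1 : z = q := by linear_combination h0
  rw [h1, Complex.norm_real, Real.norm_eq_abs] at hz
  exact absurd hz (abs_lt.2 ⟨h, h'⟩).ne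

theorem two_cos_eq (ξ : ℝ) : (2 * Real.cos ξ : ℂ)
    = Complex.exp (Complex.I * ξ) + (Complex.exp (Complex.I * ξ))⁻¹ := by
  rw [Complex.ofReal_cos, Complex.cos, neg_mul, Complex.exp_neg, mul_comm (ξ:ℂ)]
  ring

theorem sq_ne_one {ξ : ℝ} (hs : Real.sin ξ ≠ 0) : Complex.exp (Complex.I * ξ)^2 - 1 ≠ 0 := by
  intro h0
  have hz := Complex.exp_ne_zero (Complex.I * ξ)
  have h1 : Complex.exp (Complex.I * ξ) - (Complex.exp (Complex.I * ξ))⁻¹ = 0 := by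
    field_simp; simpa using h0
  apply hs
  have : (Real.sin ξ : ℂ) = 0 := by
    rw [Complex.ofReal_sin, Complex.sin, neg_mul, Complex.exp_neg, mul_comm (ξ:ℂ)]
    rw [show (Complex.exp (Complex.I * ξ))⁻¹ - Complex.exp (Complex.I * ξ) = 0 by
      linear_combination -h1]
    simp
  exact_mod_cast this

theorem cAmp_eq (p q ξ : ℝ) : cAmp p q ξ
    = (Complex.exp (Complex.I * ξ) - p) * (Complex.exp (Complex.I * ξ) - q)
      / (Complex.exp (Complex.I * ξ)^2 - 1) := by
  have hz := Complex.exp_ne_zero (Complex.I * ξ)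
  unfold cAmp
  rw [show -Complex.I * (ξ:ℂ) = -(Complex.I * ξ) by ring,
    show -2 * Complex.I * (ξ:ℂ) = -((2:ℕ) * (Complex.I * ξ)) by push_cast; ring,
    Complex.exp_neg, Complex.exp_neg, Complex.exp_nat_mul]
  generalize Complex.exp (Complex.I * ξ) = z at *
  have e2 : 1 - (z^2)⁻¹ = (z^2-1)/z^2 := by field_simp
  have e3 : ∀ p : ℂ, 1 - p * z⁻¹ = (z - p)/z := fun p => by field_simp
  rw [e2, e3, e3, div_mul_div_comm, ← sq, div_div_div_cancel_right₀ (pow_ne_zero 2 hz)]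

theorem cAmp_neg (p q ξ : ℝ) : cAmp p q (-ξ)
    = -((1 - p * Complex.exp (Complex.I * ξ)) * (1 - q * Complex.exp (Complex.I * ξ)))
      / (Complex.exp (Complex.I * ξ)^2 - 1) := by
  unfold cAmp
  rw [show -Complex.I * ((-ξ:ℝ):ℂ) = (Complex.I * ξ) by push_cast; ring,
    show -2 * Complex.I * ((-ξ:ℝ):ℂ) = ((2:ℕ) * (Complex.I * ξ)) by push_cast; ring,
    Complex.exp_nat_mul, neg_div, ← div_neg, neg_sub]

/-- The plane wave expansion `p_l(ξ) = c(ξ) e^{ilξ} + c(-ξ) e^{-ilξ}`. -/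
theorem bs_eq (p q : ℝ) (l : ℤ) {ξ : ℝ} (hs : Real.sin ξ ≠ 0) :
    (bs (p*q) (p+q) l ξ : ℂ) = cAmp p q ξ * Complex.exp (Complex.I * ξ)^l
      + cAmp p q (-ξ) * Complex.exp (Complex.I * ξ)^(-l) := by
  have hU : ∀ k : ℤ, (((Polynomial.Chebyshev.U ℝ k).eval (Real.cos ξ) : ℝ) : ℂ)
      = (Complex.exp (Complex.I * ξ)^(k+1) - Complex.exp (Complex.I * ξ)^(-(k+1)))
        / (Complex.exp (Complex.I * ξ) - (Complex.exp (Complex.I * ξ))⁻¹) := by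
    intro k
    have hz := Complex.exp_ne_zero (Complex.I * ξ)
    have h1 : Complex.exp (Complex.I * ξ) - (Complex.exp (Complex.I * ξ))⁻¹ ≠ 0 := by
      intro h0
      apply sq_ne_one hs
      field_simp at h0
      simpa using h0
    rw [eq_div_iff h1]
    have h2 : (((Polynomial.Chebyshev.U ℝ k).eval (Real.cos ξ) : ℝ) : ℂ) * Real.sin ξ
        = Complex.sin ((k+1) * ξ) := by
      rw [← Complex.ofReal_mul, Polynomial.Chebyshev.U_real_cos]; push_cast; rfl
    have h3 : ∀ k : ℤ, 2 * Complex.I * Complex.sin (k * ξ)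
        = Complex.exp (Complex.I * ξ)^k - Complex.exp (Complex.I * ξ)^(-k) := by
      intro k
      rw [← Complex.exp_int_mul, ← Complex.exp_int_mul, Complex.sin]
      push_cast
      rw [show -((k:ℂ) * ξ) * Complex.I = -(k:ℂ) * (Complex.I * ξ) by ring,
        show ((k:ℂ) * ξ) * Complex.I = (k:ℂ) * (Complex.I * ξ) by ring]
      linear_combination (Complex.exp (-(k:ℂ) * (Complex.I * ξ))
        - Complex.exp ((k:ℂ) * (Complex.I * ξ))) * Complex.I_sq
    have h4 := h3 1
    have h5 := h3 (k+1)
    simp only [Int.cast_one, one_mul, zpow_one, zpow_neg] at h4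
    rw [← h5, ← h4]
    push_cast at h2 ⊢
    linear_combination 2 * Complex.I * h2
  have hz := Complex.exp_ne_zero (Complex.I * ξ)
  have hz2 := sq_ne_one hs
  rw [cAmp_eq, cAmp_neg]
  unfold bs
  simp only [Complex.ofReal_add, Complex.ofReal_sub, Complex.ofReal_mul]
  rw [hU, hU, hU]
  generalize Complex.exp (Complex.I * ξ) = z at *
  simp only [zpow_neg, zpow_add₀ hz, zpow_sub₀ hz, zpow_ofNat]
  have hZ : z^l ≠ 0 := zpow_ne_zero _ hz
  generalize z^l = Z at *
  have e1 : z - z⁻¹ = (z^2-1)/z := by field_simp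
  rw [e1]
  generalize z^2 - 1 = w at hz2
  field_simp
  ring

/-! ### The Bethe equation -/

/-- The left-hand side of the equation that determines the spectral points. -/
noncomputable def phase (M : ℕ) (pm qm pp qp ξ : ℝ) : ℝ :=
  2*(M:ℝ)*ξ + v pm ξ + v qm ξ + v pp ξ + v qp ξ

section
variable {M : ℕ} {pm qm pp qp : ℝ} (a1 : -1 < pm) (a2 : pm < 1) (b1 : -1 < qm) (b2 : qm < 1)
  (c1 : -1 < pp) (c2 : pp < 1) (d1 : -1 < qp) (d2 : qp < 1)
include a1 a2 b1 b2 c1 c2 d1 d2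

theorem phase_strictMono : StrictMono (phase M pm qm pp qp) := by
  intro x y hxy
  have h1 := v_strictMono a1 a2 hxy
  have h2 := v_strictMono b1 b2 hxy
  have h3 := v_strictMono c1 c2 hxy
  have h4 := v_strictMono d1 d2 hxy
  have h5 : (M:ℝ) * x ≤ M * y := mul_le_mul_of_nonneg_left hxy.le (Nat.cast_nonneg M)
  unfold phase
  linarith

/-- The phase vanishes at `0` and equals `2 (M + 2) π` at `π`, so the solutions for `i ≤ M` are
interior. -/
theorem mem_Ioo_of_phase {i : ℕ} (hi : i ≤ M) {ξ : ℝ}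
    (h : phase M pm qm pp qp ξ = 2 * Real.pi * ((i:ℝ) + 1)) : ξ ∈ Set.Ioo 0 Real.pi := by
  have hmono := phase_strictMono (M := M) a1 a2 b1 b2 c1 c2 d1 d2
  have hpi := Real.pi_pos
  constructor
  · apply hmono.lt_iff_lt.1
    rw [h]
    simp only [phase, v_zero]
    have : (0:ℝ) ≤ i := Nat.cast_nonneg i
    simp only [mul_zero, add_zero]
    positivity
  · apply hmono.lt_iff_lt.1
    rw [h]
    simp only [phase, v_pi a1 a2, v_pi b1 b2, v_pi c1 c2, v_pi d1 d2]
    have : (i:ℝ) ≤ M := by exact_mod_cast hi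
    nlinarith

/-- Exponentiated form of the spectral equation (`z = e^{iξ}`): `z^{2M} ∏ (z - q) / (1 - q z) = 1`,
with denominators cleared. -/
theorem bethe {i : ℕ} {ξ : ℝ}
    (h : phase M pm qm pp qp ξ = 2 * Real.pi * ((i:ℝ) + 1)) :
    let z := Complex.exp (Complex.I * ξ)
    (z^M)^2 * ((z - pm) * (z - qm) * ((z - pp) * (z - qp)))
      = (1 - pm * z) * (1 - qm * z) * ((1 - pp * z) * (1 - qp * z)) := by
  intro z
  have e : (z^M)^2 * Complex.exp (Complex.I * v pm ξ) * Complex.exp (Complex.I * v qm ξ)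
      * Complex.exp (Complex.I * v pp ξ) * Complex.exp (Complex.I * v qp ξ) = 1 := by
    rw [← pow_mul, ← Complex.exp_nat_mul, ← Complex.exp_add, ← Complex.exp_add, ← Complex.exp_add,
      ← Complex.exp_add, Complex.exp_eq_one_iff]
    refine ⟨i + 1, ?_⟩
    have h' := congrArg (fun x : ℝ => (x:ℂ)) h
    simp only [phase] at h'
    push_cast at h' ⊢
    linear_combination Complex.I * h'
  have f1 : _ = z - pm := exp_v a1 a2 ξ
  have f2 : _ = z - qm := exp_v b1 b2 ξ
  have f3 : _ = z - pp := exp_v c1 c2 ξ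
  have f4 : _ = z - qp := exp_v d1 d2 ξ
  rw [← f1, ← f2, ← f3, ← f4]
  linear_combination (1 - pm * z) * (1 - qm * z) * ((1 - pp * z) * (1 - qp * z)) * e

end

/-! ### One-variable orthogonality -/

theorem bs_add_two (a b : ℝ) (l : ℤ) (ξ : ℝ) :
    bs a b (l + 2) ξ = 2 * Real.cos ξ * bs a b (l + 1) ξ - bs a b l ξ := by
  have h : ∀ k : ℤ, (Polynomial.Chebyshev.U ℝ (k + 2)).eval (Real.cos ξ)
      = 2 * Real.cos ξ * (Polynomial.Chebyshev.U ℝ (k + 1)).eval (Real.cos ξ)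
        - (Polynomial.Chebyshev.U ℝ k).eval (Real.cos ξ) := by
    intro k
    rw [Polynomial.Chebyshev.U_add_two]
    simp
  have h1 := h l
  have h2 := h (l-1)
  have h3 := h (l-2)
  unfold bs
  rw [show l - 1 + 2 = l + 2 - 1 by ring, show l - 1 + 1 = l + 1 - 1 by ring] at h2
  rw [show l - 2 + 2 = l + 2 - 2 by ring, show l - 2 + 1 = l + 1 - 2 by ring] at h3
  rw [h1, h2, h3]
  ring

theorem bs_zero (a b ξ : ℝ) : bs a b 0 ξ = 1 - a := by
  simp [bs]
  ring

theorem bs_one (a b ξ : ℝ) : bs a b 1 ξ = 2 * Real.cos ξ - b := by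
  simp [bs]

/-- Christoffel–Darboux formula for two solutions of the three-term recurrence. The weight
`(1 - a)⁻¹` at `l = 0` absorbs the boundary term at the lower end. -/
theorem christoffel_darboux {x y a b : ℝ} (_ : 1 - a ≠ 0) {p q : ℕ → ℝ}
    (p0 : p 0 = 1 - a) (p1 : p 1 = x - b) (hp : ∀ k, p (k+2) = x * p (k+1) - p k)
    (q0 : q 0 = 1 - a) (q1 : q 1 = y - b) (hq : ∀ k, q (k+2) = y * q (k+1) - q k) (K : ℕ) :
    (x - y) * (p 0 * q 0 * (1 - a)⁻¹ + ∑ k ∈ Finset.range K, p (k+1) * q (k+1))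
      = p (K+1) * q K - p K * q (K+1) := by
  induction K with
  | zero =>
    simp only [Finset.range_zero, Finset.sum_empty, zero_add, p0, p1, q0, q1]
    field_simp
    ring
  | succ K ih =>
    rw [Finset.sum_range_succ, ← add_assoc, mul_add, ih, hp, hq]
    ring

/-- The one-variable weights: `(1 - a₋)⁻¹` at `0`, `(1 - a₊)⁻¹` at `M`, and `1` in between. -/
noncomputable def wt (am ap : ℝ) (M l : ℕ) : ℝ :=
  (1 - am * (if l = 0 then 1 else 0))⁻¹ * (1 - ap * (if l = M then 1 else 0))⁻¹

theorem sum_wt (am ap : ℝ) (K : ℕ) (f : ℕ → ℝ) :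
    ∑ l ∈ Finset.range (K+2), f l * wt am ap (K+1) l
      = f 0 * (1 - am)⁻¹ + ∑ k ∈ Finset.range K, f (k+1) + f (K+1) * (1 - ap)⁻¹ := by
  rw [Finset.sum_range_succ, Finset.sum_range_succ', add_comm (Finset.sum _ _)]
  congr 1
  · congr 1
    · simp [wt]
    · refine Finset.sum_congr rfl fun k hk => ?_
      have : k ≠ K := (Finset.mem_range.1 hk).ne
      simp [wt, this]
  · simp [wt]

theorem one_sub_mul_pos {p q : ℝ} (a1 : -1 < p) (a2 : p < 1) (b1 : -1 < q) (b2 : q < 1) :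
    0 < 1 - p * q := by
  have : |p * q| < 1 := by
    rw [abs_mul]
    exact mul_lt_one_of_nonneg_of_lt_one_left (abs_nonneg p) (abs_lt.2 ⟨a1, a2⟩)
      (abs_lt.2 ⟨b1, b2⟩).le
  linarith [(abs_lt.1 this).2]

section
variable {K : ℕ} {pm qm pp qp : ℝ} (a1 : -1 < pm) (a2 : pm < 1) (b1 : -1 < qm) (b2 : qm < 1)
  (c1 : -1 < pp) (c2 : pp < 1) (d1 : -1 < qp) (d2 : qp < 1)
include a1 a2 b1 b2 c1 c2 d1 d2

/-- At a solution of the Bethe equation the polynomials satisfy the boundary condition at the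
upper end `l = M = K + 1`. -/
theorem bs_boundary {i : ℕ} (hi : i ≤ K + 1) {ξ : ℝ}
    (h : phase (K+1) pm qm pp qp ξ = 2 * Real.pi * ((i:ℝ) + 1)) :
    (1 - pp * qp) * bs (pm*qm) (pm+qm) K ξ
      = (2 * Real.cos ξ - (pp + qp)) * bs (pm*qm) (pm+qm) (K+1) ξ := by
  have hI := mem_Ioo_of_phase a1 a2 b1 b2 c1 c2 d1 d2 hi h
  have hs : Real.sin ξ ≠ 0 := (Real.sin_pos_of_mem_Ioo hI).ne'
  have hb := bethe a1 a2 b1 b2 c1 c2 d1 d2 h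
  have hx := two_cos_eq ξ
  have hz := Complex.exp_ne_zero (Complex.I * ξ)
  have hz2 := sq_ne_one hs
  apply Complex.ofReal_injective
  simp only [Complex.ofReal_mul, Complex.ofReal_sub, Complex.ofReal_add, Complex.ofReal_one,
    Complex.ofReal_ofNat]
  rw [bs_eq _ _ _ hs, bs_eq _ _ _ hs, cAmp_eq, cAmp_neg, hx]
  simp only at hb
  generalize Complex.exp (Complex.I * ξ) = z at *
  simp only [zpow_neg, zpow_natCast]
  rw [zpow_add₀ hz, zpow_natCast, zpow_one]
  rw [pow_succ z K] at hb
  have hZ : z^K ≠ 0 := pow_ne_zero _ hz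
  generalize z^K = Z at *
  field_simp
  linear_combination (-1) * hb

/-- Distinct solutions of the Bethe equation give orthogonal vectors. -/
theorem orth_ne {i j : ℕ} (hi : i ≤ K + 1) (hj : j ≤ K + 1) (hij : i ≠ j) {ξ η : ℝ}
    (h : phase (K+1) pm qm pp qp ξ = 2 * Real.pi * ((i:ℝ) + 1))
    (h' : phase (K+1) pm qm pp qp η = 2 * Real.pi * ((j:ℝ) + 1)) :
    ∑ l ∈ Finset.range (K+2), bs (pm*qm) (pm+qm) l ξ * bs (pm*qm) (pm+qm) l η
      * wt (pm*qm) (pp*qp) (K+1) l = 0 := by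
  have hI := mem_Ioo_of_phase a1 a2 b1 b2 c1 c2 d1 d2 hi h
  have hJ := mem_Ioo_of_phase a1 a2 b1 b2 c1 c2 d1 d2 hj h'
  have hne : ξ ≠ η := by
    rintro rfl
    rw [h] at h'
    have := mul_left_cancel₀ (by positivity) h'
    apply hij
    exact_mod_cast add_right_cancel this
  have hxy : 2 * Real.cos ξ - 2 * Real.cos η ≠ 0 := by
    intro h0
    exact hne (Real.injOn_cos ⟨hI.1.le, hI.2.le⟩ ⟨hJ.1.le, hJ.2.le⟩ (by linarith))
  have hB := bs_boundary a1 a2 b1 b2 c1 c2 d1 d2 hi h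
  have hB' := bs_boundary a1 a2 b1 b2 c1 c2 d1 d2 hj h'
  have hA := (one_sub_mul_pos a1 a2 b1 b2).ne'
  have hA' := (one_sub_mul_pos c1 c2 d1 d2).ne'
  have cd := christoffel_darboux (x := 2 * Real.cos ξ) (y := 2 * Real.cos η) (b := pm + qm) hA
    (p := fun k : ℕ => bs (pm*qm) (pm+qm) k ξ) (q := fun k : ℕ => bs (pm*qm) (pm+qm) k η)
    (by simp [bs_zero]) (by simp [bs_one])
    (fun k => by have := bs_add_two (pm*qm) (pm+qm) k ξ; push_cast; exact this)
    (by simp [bs_zero]) (by simp [bs_one])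
    (fun k => by have := bs_add_two (pm*qm) (pm+qm) k η; push_cast; exact this) K
  rw [sum_wt _ _ _ (fun l : ℕ => bs (pm*qm) (pm+qm) l ξ * bs (pm*qm) (pm+qm) l η)]
  apply (mul_eq_zero.1 _).resolve_left hxy
  rw [mul_add, cd]
  push_cast
  field_simp
  linear_combination bs (pm*qm) (pm+qm) (K+1) ξ * hB' - bs (pm*qm) (pm+qm) (K+1) η * hB

omit c1 c2 d1 d2 in
/-- Geometric summation of the squares, from the plane wave expansion. -/
theorem sum_sq {ξ : ℝ} (hs : Real.sin ξ ≠ 0) (K : ℕ) :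
    let z := Complex.exp (Complex.I * ξ)
    let c := cAmp pm qm ξ
    let c' := cAmp pm qm (-ξ)
    (((bs (pm*qm) (pm+qm) 0 ξ)^2 * (1 - pm * qm)⁻¹
      + ∑ k ∈ Finset.range K, (bs (pm*qm) (pm+qm) ((k+1:ℕ):ℤ) ξ)^2 : ℝ) : ℂ)
      = c * c' * (2 * (K+1:ℕ) - 1 + (1 - pm^2) / (1 - 2*pm*Real.cos ξ + pm^2)
          + (1 - qm^2) / (1 - 2*qm*Real.cos ξ + qm^2))
        + (c * z^(K+1))^2 / (z^2 - 1) + (c' * (z^(K+1))⁻¹)^2 / ((z^2)⁻¹ - 1) := by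
  intro z c c'
  have hz : z ≠ 0 := Complex.exp_ne_zero _
  have hz2 : z^2 - 1 ≠ 0 := sq_ne_one hs
  have hzn : ‖z‖ = 1 := exp_I_norm ξ
  have hA : (1 - pm * qm : ℂ) ≠ 0 := by exact_mod_cast (one_sub_mul_pos a1 a2 b1 b2).ne'
  have hz3 : (z^2)⁻¹ - 1 = -(z^2 - 1) / z^2 := by field_simp; ring
  induction K with
  | zero =>
    have k1 := one_sub_mul_ne a1 a2 hzn
    have k2 := one_sub_mul_ne b1 b2 hzn
    have k3 := sub_ne a1 a2 hzn
    have k4 := sub_ne b1 b2 hzn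
    have hden : ∀ q : ℝ, (1 - 2*q*Real.cos ξ + q^2 : ℂ) = (1 - q * z) * (z - q) / z := by
      intro q
      have : (2 * Real.cos ξ : ℂ) = z + z⁻¹ := two_cos_eq ξ
      field_simp at this ⊢
      linear_combination (-q : ℂ) * this
    rw [hden, hden, bs_zero, hz3]
    have hc : c = (z - pm) * (z - qm) / (z^2 - 1) := cAmp_eq _ _ _
    have hc' : c' = -((1 - pm * z) * (1 - qm * z)) / (z^2 - 1) := cAmp_neg _ _ _
    rw [hc, hc']
    push_cast
    simp only [Finset.range_zero, Finset.sum_empty]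
    clear_value z
    generalize hw : z^2 - 1 = w at *
    field_simp
    rw [← hw]
    ring
  | succ K ih =>
    rw [Finset.sum_range_succ, ← add_assoc, Complex.ofReal_add, ih, Complex.ofReal_pow,
      bs_eq _ _ _ hs, hz3]
    change _ + (c * z^_ + c' * z^_)^2 = _
    simp only [zpow_neg, zpow_natCast]
    have hZ : z^(K+1) ≠ 0 := pow_ne_zero _ hz
    rw [pow_succ z (K+1)]
    generalize z^(K+1) = Z at *
    clear_value z c c'
    push_cast
    field_simp
    ring

omit a1 a2 b1 b2 c1 c2 d1 d2 in
/-- The contribution of the upper end `l = M` to the squared norm, divided by `c(ξ) c(-ξ)`. -/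
theorem boundary_identity {z p q : ℂ} (_ : z ≠ 0) (hz2 : z^2 - 1 ≠ 0) (k1 : 1 - p * z ≠ 0)
    (k2 : 1 - q * z ≠ 0) (k3 : z - p ≠ 0) (k4 : z - q ≠ 0) (_ : 1 - p * q ≠ 0) :
    -((1 - p * z) * (1 - q * z) / ((z - p) * (z - q))) / (z^2 - 1)
      - ((z - p) * (z - q) / ((1 - p * z) * (1 - q * z))) / (-(z^2 - 1) / z^2)
      + (2 - (1 - p * z) * (1 - q * z) / ((z - p) * (z - q))
        - (z - p) * (z - q) / ((1 - p * z) * (1 - q * z))) * (1 - p * q)⁻¹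
    = 1 + (1 - p^2) / ((1 - p * z) * (z - p) / z) + (1 - q^2) / ((1 - q * z) * (z - q) / z) := by
  have e : 2 - (1 - p * z) * (1 - q * z) / ((z - p) * (z - q))
      - (z - p) * (z - q) / ((1 - p * z) * (1 - q * z))
      = -((1 - p * q)^2 * (z^2 - 1)^2)
        / ((z - p) * (z - q) * ((1 - p * z) * (1 - q * z))) := by
    have hXY : (1 - p * z) * (1 - q * z) - (z - p) * (z - q) + (1 - p * q) * (z^2 - 1) = 0 := by
      ring
    have hX := mul_ne_zero k1 k2
    have hY := mul_ne_zero k3 k4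
    generalize (1 - p * z) * (1 - q * z) = X at *
    generalize (z - p) * (z - q) = Y at *
    field_simp
    linear_combination (-(X - Y - (1 - p * q) * (z^2 - 1))) * hXY
  rw [e]
  generalize hw : z^2 - 1 = w at *
  generalize hP : 1 - p * z = P at *
  generalize hQ : 1 - q * z = Q at *
  generalize hP' : z - p = P' at *
  generalize hQ' : z - q = Q' at *
  generalize hD : 1 - p * q = D at *
  field_simp
  rw [← hw, ← hP, ← hP', ← hQ, ← hQ', ← hD]
  ring

/-- The squared norm at a spectral point: the terms of `sum_sq` at the upper end are evaluated by
the Bethe equation, and `boundary_identity` turns them into the contribution of `p₊, q₊` to `H`. -/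
theorem orth_self {i : ℕ} (hi : i ≤ K + 1) {ξ : ℝ}
    (h : phase (K+1) pm qm pp qp ξ = 2 * Real.pi * ((i:ℝ) + 1)) :
    ((∑ l ∈ Finset.range (K+2), bs (pm*qm) (pm+qm) l ξ * bs (pm*qm) (pm+qm) l ξ
      * wt (pm*qm) (pp*qp) (K+1) l : ℝ) : ℂ)
      = cAmp pm qm ξ * cAmp pm qm (-ξ) * (Hw (K+1) pm qm pp qp ξ : ℝ) := by
  have hI := mem_Ioo_of_phase a1 a2 b1 b2 c1 c2 d1 d2 hi h
  have hs : Real.sin ξ ≠ 0 := (Real.sin_pos_of_mem_Ioo hI).ne'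
  have hb := bethe a1 a2 b1 b2 c1 c2 d1 d2 h
  have hsum := sum_sq a1 a2 b1 b2 hs K
  rw [sum_wt _ _ _ (fun l : ℕ => bs (pm*qm) (pm+qm) l ξ * bs (pm*qm) (pm+qm) l ξ)]
  simp only [← sq, Nat.cast_zero]
  simp only at hsum hb
  rw [Complex.ofReal_add, hsum, Complex.ofReal_mul, Complex.ofReal_pow, bs_eq _ _ _ hs]
  have hx := two_cos_eq ξ
  have hz := Complex.exp_ne_zero (Complex.I * ξ)
  have hz2 := sq_ne_one hs
  have hzn := exp_I_norm ξ
  have hden : ∀ q : ℝ, (1 - 2*q*Real.cos ξ + q^2 : ℂ) = (1 - q * Complex.exp (Complex.I * ξ))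
      * (Complex.exp (Complex.I * ξ) - q) / Complex.exp (Complex.I * ξ) := by
    intro q
    field_simp at hx ⊢
    linear_combination (-q : ℂ) * hx
  unfold Hw
  push_cast
  rw [← Complex.ofReal_cos]
  rw [hden pp, hden qp]
  set A := (1 - pm^2 : ℂ) / (1 - 2*pm*Real.cos ξ + pm^2)
  set B := (1 - qm^2 : ℂ) / (1 - 2*qm*Real.cos ξ + qm^2)
  have hc := cAmp_eq pm qm ξ
  have hc' := cAmp_neg pm qm ξ
  clear_value A B
  clear hden hsum
  rw [zpow_neg, show ((K:ℤ)+1) = ((K+1:ℕ):ℤ) by push_cast; rfl, zpow_natCast]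
  have k1 := one_sub_mul_ne a1 a2 hzn
  have k2 := one_sub_mul_ne b1 b2 hzn
  have k3 := sub_ne a1 a2 hzn
  have k4 := sub_ne b1 b2 hzn
  have k5 := one_sub_mul_ne c1 c2 hzn
  have k6 := one_sub_mul_ne d1 d2 hzn
  have k7 := sub_ne c1 c2 hzn
  have k8 := sub_ne d1 d2 hzn
  have hA : (1 - pp * qp : ℂ) ≠ 0 := by exact_mod_cast (one_sub_mul_pos c1 c2 d1 d2).ne'
  generalize cAmp pm qm ξ = c at *
  generalize cAmp pm qm (-ξ) = c' at *
  generalize Complex.exp (Complex.I * ξ) = z at *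
  have hZ : z^(K+1) ≠ 0 := pow_ne_zero _ hz
  generalize z^(K+1) = Z at *
  have hz3 : (z^2)⁻¹ - 1 = -(z^2 - 1) / z^2 := by field_simp; ring
  have r1 : (c * Z)^2 = -(c * c') * ((1 - pp * z) * (1 - qp * z) / ((z - pp) * (z - qp))) := by
    have hmul : (z - pm) * (z - qm) * Z^2
        = (1 - pm * z) * (1 - qm * z) * ((1 - pp * z) * (1 - qp * z) / ((z - pp) * (z - qp))) := by
      rw [← mul_div_assoc, eq_div_iff (mul_ne_zero k7 k8)]
      linear_combination hb
    rw [hc, hc']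
    generalize (1 - pp * z) * (1 - qp * z) / ((z - pp) * (z - qp)) = R at *
    have hY := mul_ne_zero k3 k4
    generalize (1 - pm * z) * (1 - qm * z) = X at *
    generalize (z - pm) * (z - qm) = Y at *
    field_simp
    linear_combination hmul
  have r2 : (c' * Z⁻¹)^2
      = -(c * c') * ((z - pp) * (z - qp) / ((1 - pp * z) * (1 - qp * z))) := by
    have hmul : (1 - pm * z) * (1 - qm * z)
        = (z - pm) * (z - qm) * Z^2 * ((z - pp) * (z - qp) / ((1 - pp * z) * (1 - qp * z))) := by
      rw [← mul_div_assoc, eq_div_iff (mul_ne_zero k5 k6)]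
      linear_combination (-1) * hb
    rw [hc, hc']
    generalize (z - pp) * (z - qp) / ((1 - pp * z) * (1 - qp * z)) = R at *
    have hX := mul_ne_zero k1 k2
    generalize (1 - pm * z) * (1 - qm * z) = X at *
    generalize (z - pm) * (z - qm) = Y at *
    field_simp
    linear_combination hmul
  have r3 : (c * Z + c' * Z⁻¹)^2 = (c * Z)^2 + 2 * (c * c') + (c' * Z⁻¹)^2 := by
    field_simp
    ring
  rw [r3, r1, r2, hz3]
  clear hc hc' r1 r2 r3 hb
  linear_combination (c * c') * boundary_identity hz hz2 k5 k6 k7 k8 hA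

end

/-! ### The Cauchy–Binet formula -/

/-- Cauchy–Binet formula, where `g : L → n → N` lists one ordering of each `n`-element subset of
`N`: every injective map `n → N` is `g l ∘ σ` for exactly one pair `(l, σ)`. -/
theorem cauchy_binet {R n N L : Type*} [CommRing R] [Fintype n] [DecidableEq n] [Fintype N]
    [Fintype L] (g : L → n → N) (hg : ∀ l, Function.Injective (g l))
    (huniq : ∀ l l' (σ σ' : Equiv.Perm n), g l ∘ σ = g l' ∘ σ' → l = l' ∧ σ = σ')
    (hex : ∀ r : n → N, Function.Injective r → ∃ l, ∃ σ : Equiv.Perm n, r = g l ∘ σ)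
    (A : Matrix n N R) (B : Matrix N n R) :
    (A * B).det = ∑ l, (A.submatrix id (g l)).det * (B.submatrix (g l) id).det := by
  classical
  have hrow : (A * B) = fun i => ∑ j, A i j • B j := by
    ext i k
    simp [Matrix.mul_apply, Finset.sum_apply]
  have h1 : (A * B).det = ∑ r : n → N, (∏ i, A i (r i)) * (B.submatrix r id).det := by
    rw [hrow]
    change Matrix.detRowAlternating.toMultilinearMap (fun i => ∑ j, A i j • B j) = _
    rw [MultilinearMap.map_sum]
    refine Finset.sum_congr rfl fun r _ => ?_
    rw [MultilinearMap.map_smul_univ]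
    rfl
  have h2 : ∑ r : n → N, (∏ i, A i (r i)) * (B.submatrix r id).det
      = ∑ r : n → N with Function.Injective r, (∏ i, A i (r i)) * (B.submatrix r id).det := by
    refine (Finset.sum_subset (Finset.filter_subset _ _) fun r _ hr => ?_).symm
    have hr' : ¬ Function.Injective r := by simpa using hr
    simp only [Function.Injective, not_forall] at hr'
    obtain ⟨i, j, hij, hne⟩ := hr'
    rw [Matrix.det_zero_of_row_eq hne (by ext k; simp [hij]), mul_zero]
  have h3 : ∑ r : n → N with Function.Injective r, (∏ i, A i (r i)) * (B.submatrix r id).det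
      = ∑ x : L × Equiv.Perm n,
          (∏ i, A i (g x.1 (x.2 i))) * (B.submatrix (g x.1 ∘ x.2) id).det := by
    symm
    refine Finset.sum_bij (fun x _ => g x.1 ∘ x.2) ?_ ?_ ?_ ?_
    · intro x _
      simpa using (hg x.1).comp x.2.injective
    · rintro ⟨l, σ⟩ _ ⟨l', σ'⟩ _ h
      obtain ⟨h1, h2⟩ := huniq l l' σ σ' h
      rw [h1, h2]
    · intro r hr
      obtain ⟨l, σ, h⟩ := hex r (by simpa using hr)
      exact ⟨(l, σ), Finset.mem_univ _, h.symm⟩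
    · intro x _
      rfl
  rw [h1, h2, h3, Fintype.sum_prod_type]
  refine Finset.sum_congr rfl fun l _ => ?_
  rw [← Matrix.det_transpose (A.submatrix id (g l)), Matrix.det_apply', Finset.sum_mul]
  refine Finset.sum_congr rfl fun σ _ => ?_
  have : B.submatrix (g l ∘ σ) id = (B.submatrix (g l) id).submatrix σ id := rfl
  dsimp only
  rw [this, Matrix.det_permute]
  simp only [Matrix.transpose_apply, Matrix.submatrix_apply, id_eq]
  ring

/-! ### Partitions as strictly decreasing sequences -/

theorem part_lt {m n : ℕ} (lam : Lam m n) (j : Fin n) :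
    (lam.1 j : ℕ) + (n - 1 - (j : ℕ)) < m + n := by
  have h1 := (lam.1 j).isLt
  have h2 := j.isLt
  omega

/-- The strictly decreasing sequence `λ_j + n - j` in `{0, …, m + n - 1}` attached to a partition
`λ` (with `j` counted from `0`, it reads `λ_j + (n - 1 - j)`). -/
def strictSeq {m n : ℕ} (lam : Lam m n) (j : Fin n) : Fin (m + n) :=
  ⟨(lam.1 j : ℕ) + (n - 1 - (j : ℕ)), part_lt lam j⟩

theorem strictSeq_strictAnti {m n : ℕ} (lam : Lam m n) : StrictAnti (strictSeq lam) := by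
  intro j k hjk
  have h1 : (lam.1 k : ℕ) ≤ lam.1 j := lam.2 j k hjk.le
  have h2 : (j:ℕ) < k := hjk
  have h3 := k.isLt
  change (lam.1 k : ℕ) + (n - 1 - (k : ℕ)) < (lam.1 j : ℕ) + (n - 1 - (j : ℕ))
  omega

theorem strictSeq_injective {m n : ℕ} : Function.Injective (@strictSeq m n) := by
  intro lam mu h
  apply Subtype.ext
  funext j
  apply Fin.ext
  have h1 := congrArg Fin.val (congrFun h j)
  simp only [strictSeq] at h1
  omega

/-- A strictly decreasing sequence drops by at least `d` over `d` steps. -/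
theorem strictAnti_gap {n N : ℕ} {s : Fin n → Fin N} (hs : StrictAnti s) (d : ℕ) :
    ∀ j k : Fin n, (k : ℕ) = j + d → (s k : ℕ) + d ≤ s j := by
  induction d with
  | zero =>
    intro j k h
    have : k = j := Fin.ext h
    rw [this]
    rfl
  | succ d ih =>
    intro j k h
    have hk := k.isLt
    have h1 := ih j ⟨j + d, by omega⟩ rfl
    have h2 : (s k : ℕ) < s ⟨j + d, by omega⟩ := hs (Fin.lt_def.2 (by simp only; omega))
    omega

theorem exists_strictSeq {m n : ℕ} {s : Fin n → Fin (m + n)} (hs : StrictAnti s) :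
    ∃ lam : Lam m n, strictSeq lam = s := by
  have lower : ∀ j : Fin n, n - 1 - (j:ℕ) ≤ s j := fun j => by
    have hj := j.isLt
    have := strictAnti_gap hs (n - 1 - j) j ⟨n - 1, by omega⟩ (by simp only; omega)
    omega
  have upper : ∀ j : Fin n, (s j : ℕ) + j < m + n := fun j => by
    have hj := j.isLt
    have := strictAnti_gap hs j ⟨0, by omega⟩ j (by simp)
    have := (s ⟨0, by omega⟩).isLt
    omega
  refine ⟨⟨fun j => ⟨s j - (n - 1 - j), ?_⟩, ?_⟩, ?_⟩
  · have := upper j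
    have := j.isLt
    omega
  · intro j k hjk
    rw [Fin.le_def] at hjk ⊢
    have := strictAnti_gap hs (k - j) j k (by omega)
    have := j.isLt
    have := k.isLt
    simp only
    omega
  · funext j
    apply Fin.ext
    simp only [strictSeq]
    have := lower j
    omega

theorem strictSeq_comp_unique {m n : ℕ} (l l' : Lam m n) (σ σ' : Equiv.Perm (Fin n))
    (h : strictSeq l ∘ σ = strictSeq l' ∘ σ') : l = l' ∧ σ = σ' := by
  have hr : Set.range (strictSeq l) = Set.range (strictSeq l') := by
    rw [← σ.surjective.range_comp (strictSeq l), h, σ'.surjective.range_comp]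
  have hl : l = l' := strictSeq_injective
    (((strictSeq_strictAnti l).range_inj (strictSeq_strictAnti l')).1 hr)
  subst hl
  refine ⟨rfl, Equiv.ext fun i => (strictSeq_strictAnti l).injective (congrFun h i)⟩

theorem exists_strictSeq_comp {m n : ℕ} (r : Fin n → Fin (m + n)) (hr : Function.Injective r) :
    ∃ l : Lam m n, ∃ σ : Equiv.Perm (Fin n), r = strictSeq l ∘ σ := by
  have h1 : StrictMono (r ∘ Tuple.sort r) :=
    (Tuple.monotone_sort r).strictMono_of_injective (hr.comp (Tuple.sort r).injective)
  obtain ⟨l, hl⟩ := exists_strictSeq (h1.comp_strictAnti Fin.rev_strictAnti)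
  refine ⟨l, (Tuple.sort r)⁻¹.trans Fin.revPerm, ?_⟩
  rw [hl]
  funext i
  simp

/-- The weight `Δ_λ` is the product of the one-variable weights: only the last entry of the strict
sequence can be `0`, and only the first can be `m + n - 1`. -/
theorem prod_wt {m n : ℕ} (hm : 1 ≤ m) (hn : 1 ≤ n) (am ap : ℝ) (lam : Lam m n) :
    ∏ j, wt am ap (m + n - 1) (strictSeq lam j) = ΔLam m n hn am ap lam := by
  unfold wt ΔLam
  rw [Finset.prod_mul_distrib]
  congr 1
  · rw [Finset.prod_eq_single ⟨n - 1, by omega⟩]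
    · simp [strictSeq]
    · intro j _ hj
      have h1 : (j:ℕ) ≠ n - 1 := fun h => hj (Fin.ext h)
      have h2 := j.isLt
      rw [if_neg]
      · simp
      · simp only [strictSeq]
        omega
    · simp
  · rw [Finset.prod_eq_single ⟨0, by omega⟩]
    · have : ((lam.1 ⟨0, by omega⟩ : ℕ) + (n - 1 - 0) = m + n - 1)
          ↔ ((lam.1 ⟨0, by omega⟩ : ℕ) = m) := by omega
      simp only [strictSeq, this]
    · intro j _ hj
      have h1 : (j:ℕ) ≠ 0 := fun h => hj (Fin.ext h)
      have h2 := j.isLt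
      have h3 := (lam.1 j).isLt
      rw [if_neg]
      · simp
      · simp only [strictSeq]
        omega
    · simp

/-! ### Amplitudes and the Vandermonde factor -/

/-- The two-variable factors of `C(ξ) C(-ξ)` combine to `(2 (cos a - cos b))⁻²`, because
`(1 - e^{-i(a+b)}) (1 - e^{-i(a-b)}) = 2 e^{-ia} (cos a - cos b)`. -/
theorem amp_pair (a b : ℝ) :
    ((1 - Complex.exp (-Complex.I * ((a + b : ℝ) : ℂ)))⁻¹ *
        (1 - Complex.exp (-Complex.I * ((a - b : ℝ) : ℂ)))⁻¹) *
    ((1 - Complex.exp (-Complex.I * ((-a + -b : ℝ) : ℂ)))⁻¹ *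
        (1 - Complex.exp (-Complex.I * ((-a - -b : ℝ) : ℂ)))⁻¹)
      = (((2 * (Real.cos a - Real.cos b) : ℝ) : ℂ))⁻¹
        * (((2 * (Real.cos a - Real.cos b) : ℝ) : ℂ))⁻¹ := by
  have ha := Complex.exp_ne_zero (Complex.I * a)
  have hb := Complex.exp_ne_zero (Complex.I * b)
  have e : ((2 * (Real.cos a - Real.cos b) : ℝ) : ℂ)
      = (2 * Real.cos a : ℂ) - (2 * Real.cos b : ℂ) := by push_cast; ring
  rw [e, two_cos_eq, two_cos_eq,
    show -Complex.I * ((a + b : ℝ) : ℂ) = -(Complex.I * a) + -(Complex.I * b) by push_cast; ring,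
    show -Complex.I * ((a - b : ℝ) : ℂ) = -(Complex.I * a) + Complex.I * b by push_cast; ring,
    show -Complex.I * ((-a + -b : ℝ) : ℂ) = Complex.I * a + Complex.I * b by push_cast; ring,
    show -Complex.I * ((-a - -b : ℝ) : ℂ) = Complex.I * a + -(Complex.I * b) by push_cast; ring]
  simp only [Complex.exp_add, Complex.exp_neg, ← mul_inv]
  congr 1
  field_simp
  ring

theorem CC_mul_CC_neg (p q : ℝ) {n : ℕ} (ξ : Fin n → ℝ) :
    CC p q ξ * CC p q (fun j => -ξ j)
      = (∏ j, cAmp p q (ξ j) * cAmp p q (-ξ j)) * ((VV ξ : ℂ)⁻¹ * (VV ξ : ℂ)⁻¹) := by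
  unfold CC VV
  rw [mul_mul_mul_comm, ← Finset.prod_mul_distrib, ← Finset.prod_mul_distrib]
  congr 1
  rw [Complex.ofReal_prod, ← Finset.prod_inv_distrib, ← Finset.prod_mul_distrib]
  refine Finset.prod_congr rfl fun j _ => ?_
  rw [Complex.ofReal_prod, ← Finset.prod_inv_distrib, ← Finset.prod_mul_distrib,
    ← Finset.prod_mul_distrib]
  exact Finset.prod_congr rfl fun k _ => amp_pair _ _

/-! ### The orthogonality relations -/

theorem stmt18 (m n : ℕ) (hm : 1 ≤ m) (hn : 1 ≤ n) (pm qm pp qp : ℝ)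
    (h1 : -1 < pm) (h2 : pm ≤ qm) (h3 : qm < 1)
    (h4 : -1 < pp) (h5 : pp ≤ qp) (h6 : qp < 1)
    (am bm ap bp : ℝ) (ham : am = pm * qm) (hbm : bm = pm + qm)
    (hap : ap = pp * qp) (hbp : bp = pp + qp)
    (ξhat : ℕ → ℝ)
    (hξ : ∀ i : ℕ, i ≤ m + n - 1 →
      2*((m:ℝ)+n-1)*(ξhat i) + v pm (ξhat i) + v qm (ξhat i) + v pp (ξhat i) + v qp (ξhat i)
        = 2*Real.pi*((i : ℝ) + 1)) :
    ∀ lamh muh : Lam m n,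
      ((∑ lam : Lam m n,
          Pgen am bm m n lam (xiVec m n ξhat lamh) * Pgen am bm m n lam (xiVec m n ξhat muh) *
            ΔLam m n hn am ap lam : ℝ) : ℂ)
        = if muh = lamh then (ΔhatLam m n pm qm pp qp ξhat lamh)⁻¹ else 0 := by
  have a2 : pm < 1 := h2.trans_lt h3
  have b1 : -1 < qm := h1.trans_le h2
  have c2 : pp < 1 := h5.trans_lt h6
  have d1 : -1 < qp := h4.trans_le h5
  subst ham hbm hap
  obtain ⟨K, hK⟩ : ∃ K, m + n = K + 2 := ⟨m + n - 2, by omega⟩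
  have hM : m + n - 1 = K + 1 := by omega
  have hph : ∀ i : ℕ, i ≤ K + 1 →
      phase (K+1) pm qm pp qp (ξhat i) = 2 * Real.pi * ((i:ℝ) + 1) := by
    intro i hi
    rw [← hξ i (by omega), phase]
    have : (m:ℝ) + n - 1 = ((K+1:ℕ):ℝ) := by
      have : (m:ℝ) + n = (K:ℝ) + 2 := by exact_mod_cast hK
      push_cast
      linarith
    rw [this]
  intro lamh muh
  set X : Lam m n → Fin n → ℝ := xiVec m n ξhat with hX
  have hXs : ∀ l j, X l j = ξhat (strictSeq l j) := fun l j => rfl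
  have hle : ∀ (l : Lam m n) j, (strictSeq l j : ℕ) ≤ K + 1 := fun l j => by
    have := (strictSeq l j).isLt
    omega
  -- `A * B` is the Gram matrix of the one-variable weighted vectors at the two spectral vectors.
  let A : Matrix (Fin n) (Fin (m + n)) ℝ := Matrix.of fun j l =>
    wt (pm*qm) (pp*qp) (K+1) l * bs (pm*qm) (pm+qm) (l:ℕ) (X lamh j)
  let B : Matrix (Fin (m + n)) (Fin n) ℝ := Matrix.of fun l k =>
    bs (pm*qm) (pm+qm) (l:ℕ) (X muh k)
  have hAB : ∀ j k, (A * B) j k = ∑ l ∈ Finset.range (K+2),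
      bs (pm*qm) (pm+qm) l (X lamh j) * bs (pm*qm) (pm+qm) l (X muh k)
        * wt (pm*qm) (pp*qp) (K+1) l := by
    intro j k
    rw [← hK, ← Fin.sum_univ_eq_sum_range, Matrix.mul_apply]
    refine Finset.sum_congr rfl fun l _ => ?_
    simp only [A, B, Matrix.of_apply]
    ring
  have hP : ∀ (lam l : Lam m n), Pgen (pm*qm) (pm+qm) m n lam (X l)
      = (Matrix.of fun j k : Fin n =>
          bs (pm*qm) (pm+qm) ((strictSeq lam j : ℕ):ℤ) (X l k)).det / VV (X l) := by
    intro lam l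
    unfold Pgen
    congr 3
    ext j k
    congr 1
    have := j.isLt
    simp only [strictSeq]
    omega
  have hsum : (∑ lam : Lam m n, Pgen (pm*qm) (pm+qm) m n lam (X lamh)
      * Pgen (pm*qm) (pm+qm) m n lam (X muh) * ΔLam m n hn (pm*qm) (pp*qp) lam)
      = (A * B).det * ((VV (X lamh))⁻¹ * (VV (X muh))⁻¹) := by
    rw [cauchy_binet strictSeq (fun l => (strictSeq_strictAnti l).injective)
      strictSeq_comp_unique exists_strictSeq_comp A B, Finset.sum_mul]
    refine Finset.sum_congr rfl fun lam _ => ?_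
    rw [hP, hP, ← prod_wt hm hn, hM]
    have hA : (A.submatrix id (strictSeq lam)).det
        = (∏ j, wt (pm*qm) (pp*qp) (K+1) (strictSeq lam j))
          * (Matrix.of fun j k : Fin n =>
          bs (pm*qm) (pm+qm) ((strictSeq lam j : ℕ):ℤ) (X lamh k)).det := by
      rw [← Matrix.det_mul_column, ← Matrix.det_transpose]
      rfl
    have hB : B.submatrix (strictSeq lam) id = Matrix.of fun j k : Fin n =>
          bs (pm*qm) (pm+qm) ((strictSeq lam j : ℕ):ℤ) (X muh k) := rfl
    rw [hA, hB]
    ring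
  rw [hsum]
  split_ifs with heq
  · subst heq
    -- Different entries of one strict sequence are different spectral points, so the Gram matrix
    -- is diagonal.
    have hdiag : A * B = Matrix.diagonal fun j => (A * B) j j := by
      ext j k
      by_cases hjk : j = k
      · subst hjk
        rw [Matrix.diagonal_apply_eq]
      · rw [Matrix.diagonal_apply_ne _ hjk, hAB]
        refine orth_ne h1 a2 b1 h3 h4 c2 d1 h6 (hle muh j) (hle muh k) ?_
          (hph _ (hle muh j)) (hph _ (hle muh k))
        intro h
        exact hjk ((strictSeq_strictAnti muh).injective (Fin.ext h))
    rw [hdiag, Matrix.det_diagonal, ΔhatLam, inv_inv, CC_mul_CC_neg, Hmn, hM]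
    simp only [Complex.ofReal_mul, Complex.ofReal_prod, Complex.ofReal_inv]
    rw [mul_right_comm, ← Finset.prod_mul_distrib]
    congr 1
    refine Finset.prod_congr rfl fun j _ => ?_
    rw [hAB]
    exact orth_self h1 a2 b1 h3 h4 c2 d1 h6 (hle muh j) (hph _ (hle muh j))
  -- Distinct partitions have strict sequences with distinct ranges, so some row of the Gram
  -- matrix pairs a spectral point with different ones only.
  · have hrow : ∃ j, ∀ k, strictSeq lamh j ≠ strictSeq muh k := by
      by_contra! hcon
      choose f hf using hcon
      have hfi : Function.Injective f := by
        intro i j hij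
        apply (strictSeq_strictAnti lamh).injective
        rw [hf, hf, hij]
      have := strictSeq_comp_unique lamh muh 1
        (Equiv.ofBijective f (Finite.injective_iff_bijective.1 hfi)) (funext hf)
      exact heq this.1.symm
    obtain ⟨j, hj⟩ := hrow
    rw [Matrix.det_eq_zero_of_row_eq_zero j, zero_mul, Complex.ofReal_zero]
    intro k
    rw [hAB]
    exact orth_ne h1 a2 b1 h3 h4 c2 d1 h6 (hle lamh j) (hle muh k)
      (fun h => hj k (Fin.ext h)) (hph _ (hle lamh j)) (hph _ (hle muh k))
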